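/- Let θ>0, β₀∈(−1,0], p∈ℕ, β=β₀+p and m∈ℕ. For R>0 and α>−1, and ξ∈ℂ with 0<|ξ|<R², define 𝒦^{m,R}_{α,β}(ξ) = Σ_{n=0}^{m−1} [(α+β+2)_n/(β+1)_n]·(ξ/R²)^n + Σ_{s=0}^{∞} (s!/(s+m)!)²·[(α+β+2)_s/((β+1)_s·R^{2s})]·ξ^{s+m} + A^{m,R}_{α,β}(ξ), where A^{m,R}_{α,β}(ξ)=0 if p≤m and A^{m,R}_{α,β}(ξ) = R^{2m}·Σ_{k=0}^{p−m−1} [Γ(α+β+1−m−k)·Γ(β+1)/(Γ(β−m−k)·Γ(α+β+2))]·(k!/(m+k)!)²·(R²/ξ)^{k+1} if p>m. Define ℒ^m_{θ,β}(ξ) = Σ_{n=0}^{m−1} (θξ)^n/(β+1)_n + Σ_{s=0}^{∞} (s!/(s+m)!)²·[θ^s/(β+1)_s]·ξ^{s+m} + B^m_{θ,β}(ξ), where B^m_{θ,β}(ξ)=0 if p≤m and B^m_{θ,β}(ξ) = θ^{−m}·Σ_{k=0}^{p−m−1} (k!/(m+k)!)²·[Γ(β+1)/Γ(β−m−k)]·(θξ)^{−(k+1)}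 if p>m. Then for every ξ∈ℂ∖{0}, lim_{R→∞} 𝒦^{m,R}_{θR²,β}(ξ) = ℒ^m_{θ,β}(ξ). -/

import Mathlib

open MeasureTheory Metric Filter

/-!
With `α = θ R²`, every `R`-dependence is carried by the quotient `(θ R² + c)_n / R^{2n}`, which is
`∏_{j<n} (θ + (c + j) / R²)`. It tends to `θ^n` (`tendsto_poch_div`), which gives the finite sum
and the terms of the series. For `c ≥ 0` it is decreasing in `R` (`poch_div_le`), so for
`R ≥ L = ‖ξ‖ + 1` the series at `R` is dominated by the series at `L`; the latter converges by the
ratio test, its ratio tending to `‖ξ‖ / L² < 1` (`summable_bound`), and dominated convergence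
applies. In the singular part, `Γ(x + n) = (x)_n Γ(x)` turns the Gamma quotient times
`R^{2(m+k+1)}` into the inverse of the same quotient with `n = m + k + 1`, which tends to
`θ^{-(m+k+1)}`.
-/

/-- The Pochhammer symbol `(x)_n = x(x+1)⋯(x+n−1)`. -/
noncomputable def poch (x : ℝ) (n : ℕ) : ℝ := (ascPochhammer ℝ n).eval x

/-- The reproducing kernel function `𝒦^{m,R}_{α,β}` of the modified
Bergman–Dirichlet space of order `m` on the disk of radius `R` (Theorem 1),
with `β = β₀ + p`. -/
noncomputable def Kker (m p : ℕ) (R α β : ℝ) (ξ : ℂ) : ℂ :=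
  (∑ n ∈ Finset.range m,
      ((poch (α + β + 2) n / poch (β + 1) n : ℝ) : ℂ) * (ξ / ((R : ℂ) ^ 2)) ^ n)
  + (∑' s : ℕ, ((((s.factorial : ℝ) / ((s + m).factorial : ℝ)) ^ 2 *
      (poch (α + β + 2) s / (poch (β + 1) s * R ^ (2 * s))) : ℝ) : ℂ) * ξ ^ (s + m))
  + (if p ≤ m then 0 else
      ((R : ℂ) ^ (2 * m)) * ∑ k ∈ Finset.range (p - m),
        ((Real.Gamma (α + β + 1 - (m : ℝ) - (k : ℝ)) * Real.Gamma (β + 1) /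
            (Real.Gamma (β - (m : ℝ) - (k : ℝ)) * Real.Gamma (α + β + 2)) *
          ((k.factorial : ℝ) / ((m + k).factorial : ℝ)) ^ 2 : ℝ) : ℂ) *
          (((R : ℂ) ^ 2) / ξ) ^ (k + 1))

/-- The reproducing kernel function `ℒ^m_{θ,β}` of the modified
Bargmann–Dirichlet space of order `m` (Proposition 1), with `β = β₀ + p`. -/
noncomputable def Lker (m p : ℕ) (θ β : ℝ) (ξ : ℂ) : ℂ :=
  (∑ n ∈ Finset.range m, ((θ : ℂ) * ξ) ^ n / ((poch (β + 1) n : ℝ) : ℂ))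
  + (∑' s : ℕ, ((((s.factorial : ℝ) / ((s + m).factorial : ℝ)) ^ 2 *
      (θ ^ s / poch (β + 1) s) : ℝ) : ℂ) * ξ ^ (s + m))
  + (if p ≤ m then 0 else
      ((((θ : ℝ) ^ m)⁻¹ : ℝ) : ℂ) * ∑ k ∈ Finset.range (p - m),
        ((((k.factorial : ℝ) / ((m + k).factorial : ℝ)) ^ 2 *
          (Real.Gamma (β + 1) / Real.Gamma (β - (m : ℝ) - (k : ℝ))) : ℝ) : ℂ) *
          ((θ : ℂ) * ξ) ^ (-((k : ℤ) + 1)))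

lemma poch_zero (x : ℝ) : poch x 0 = 1 := by simp [poch]

lemma poch_succ (x : ℝ) (n : ℕ) : poch x (n + 1) = poch x n * (x + n) := by
  simp [poch, ascPochhammer_succ_eval]

lemma poch_pos {x : ℝ} (hx : 0 < x) (n : ℕ) : 0 < poch x n :=
  ascPochhammer_pos n x hx

lemma poch_div_succ (θ c R : ℝ) (n : ℕ) :
    poch (θ * R ^ 2 + c) (n + 1) / R ^ (2 * (n + 1)) =
      poch (θ * R ^ 2 + c) n / R ^ (2 * n) * ((θ * R ^ 2 + c + n) / R ^ 2) := by
  rw [poch_succ, mul_add 2 n 1, pow_add, mul_one, mul_div_mul_comm]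

lemma tendsto_poch_div (θ c : ℝ) (n : ℕ) :
    Tendsto (fun R : ℝ => poch (θ * R ^ 2 + c) n / R ^ (2 * n)) atTop (nhds (θ ^ n)) := by
  induction n with
  | zero => simp [poch_zero]
  | succ n ih =>
    simp_rw [poch_div_succ, pow_succ θ n]
    refine ih.mul ?_
    have h : Tendsto (fun R : ℝ => θ + (c + n) / R ^ 2) atTop (nhds (θ + 0)) :=
      tendsto_const_nhds.add (tendsto_const_nhds.div_atTop (tendsto_pow_atTop two_ne_zero))
    rw [add_zero] at h
    refine h.congr' ?_
    filter_upwards [eventually_gt_atTop 0] with R hR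
    field_simp
    ring

lemma poch_div_le {θ c L R : ℝ} (hθ : 0 < θ) (hc : 0 < c) (hL : 0 < L) (hLR : L ≤ R) (n : ℕ) :
    poch (θ * R ^ 2 + c) n / R ^ (2 * n) ≤ poch (θ * L ^ 2 + c) n / L ^ (2 * n) := by
  have hR : 0 < R := hL.trans_le hLR
  induction n with
  | zero => simp [poch_zero]
  | succ n ih =>
    rw [poch_div_succ, poch_div_succ]
    have hp : 0 < poch (θ * L ^ 2 + c) n := poch_pos (by positivity) n
    refine mul_le_mul ih ?_ (by positivity) (by positivity)
    have e : ∀ T : ℝ, 0 < T → (θ * T ^ 2 + c + n) / T ^ 2 = θ + (c + n) / T ^ 2 := by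
      intro T hT
      field_simp
      ring
    rw [e R hR, e L hL]
    gcongr

lemma Gamma_add_nat {x : ℝ} (hx : 0 < x) (n : ℕ) :
    Real.Gamma (x + n) = poch x n * Real.Gamma x := by
  induction n with
  | zero => simp [poch_zero]
  | succ n ih =>
    have h : x + n ≠ 0 := by positivity
    rw [Nat.cast_add, Nat.cast_one, ← add_assoc, Real.Gamma_add_one h, ih, poch_succ]
    ring

/-- The dominating series, by the ratio test: consecutive terms have ratio
`(a + s) / (b + s) * r → r < 1`. -/
lemma summable_bound {a b r C : ℝ} (ha : 0 < a) (hb : 0 < b) (hr : 0 < r) (hr1 : r < 1)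
    (hC : 0 < C) : Summable (fun s : ℕ => poch a s / poch b s * r ^ s * C) := by
  have hpos : ∀ s, 0 < poch a s / poch b s * r ^ s * C := fun s => by
    have := poch_pos ha s
    have := poch_pos hb s
    positivity
  refine summable_of_ratio_test_tendsto_lt_one hr1
    (Eventually.of_forall fun s => (hpos s).ne') ?_
  have h : Tendsto (fun s : ℕ => (1 + (a - b) / (b + s)) * r) atTop (nhds ((1 + 0) * r)) :=
    (tendsto_const_nhds.add (tendsto_const_nhds.div_atTop
      (tendsto_atTop_add_const_left _ _ tendsto_natCast_atTop_atTop))).mul_const r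
  rw [add_zero, one_mul] at h
  refine h.congr fun s => ?_
  rw [Real.norm_of_nonneg (hpos _).le, Real.norm_of_nonneg (hpos _).le, poch_succ, poch_succ]
  have := poch_pos ha s
  have := poch_pos hb s
  field_simp
  ring

lemma tendsto_regular (θ c b : ℝ) (m : ℕ) (ξ : ℂ) :
    Tendsto (fun R : ℝ => ∑ n ∈ Finset.range m,
      ((poch (θ * R ^ 2 + c) n / poch b n : ℝ) : ℂ) * (ξ / ((R : ℂ) ^ 2)) ^ n) atTop
      (nhds (∑ n ∈ Finset.range m, ((θ : ℂ) * ξ) ^ n / ((poch b n : ℝ) : ℂ))) := by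
  refine tendsto_finsetSum _ fun n _ => ?_
  have h := ((Complex.continuous_ofReal.tendsto _).comp (tendsto_poch_div θ c n)).mul_const
    (ξ ^ n / ((poch b n : ℝ) : ℂ))
  convert h using 2 with R
  · simp only [Function.comp, Complex.ofReal_div, Complex.ofReal_pow, div_pow, pow_mul]
    ring
  · push_cast
    ring

lemma tendsto_series {θ c b : ℝ} (hθ : 0 < θ) (hc : 0 < c) (hb : 0 < b) (m : ℕ) {ξ : ℂ}
    (hξ : ξ ≠ 0) :
    Tendsto (fun R : ℝ => ∑' s : ℕ, ((((s.factorial : ℝ) / ((s + m).factorial : ℝ)) ^ 2 *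
      (poch (θ * R ^ 2 + c) s / (poch b s * R ^ (2 * s))) : ℝ) : ℂ) * ξ ^ (s + m)) atTop
      (nhds (∑' s : ℕ, ((((s.factorial : ℝ) / ((s + m).factorial : ℝ)) ^ 2 *
      (θ ^ s / poch b s) : ℝ) : ℂ) * ξ ^ (s + m))) := by
  have hn : 0 < ‖ξ‖ := norm_pos_iff.mpr hξ
  set L : ℝ := ‖ξ‖ + 1 with hLdef
  have hL : 0 < L := by positivity
  have hr : ‖ξ‖ / L ^ 2 < 1 := by
    rw [div_lt_one (by positivity)]
    nlinarith
  refine tendsto_tsum_of_dominated_convergence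
    (bound := fun s : ℕ => poch (θ * L ^ 2 + c) s / poch b s * (‖ξ‖ / L ^ 2) ^ s * ‖ξ‖ ^ m)
    (summable_bound (by positivity) hb (by positivity) hr (by positivity)) ?_ ?_
  · intro s
    refine Tendsto.mul_const _ ((Complex.continuous_ofReal.tendsto _).comp ?_)
    refine Tendsto.const_mul _ ?_
    refine ((tendsto_poch_div θ c s).div_const (poch b s)).congr fun R => ?_
    rw [div_div, mul_comm (R ^ (2 * s))]
  · filter_upwards [eventually_ge_atTop L] with R hLR s
    have hR : 0 < R := hL.trans_le hLR
    have hp : 0 < poch (θ * R ^ 2 + c) s := poch_pos (by positivity) s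
    have hp' : 0 < poch (θ * L ^ 2 + c) s := poch_pos (by positivity) s
    have hb' := poch_pos hb s
    have hf : ((s.factorial : ℝ) / ((s + m).factorial : ℝ)) ^ 2 ≤ 1 := by
      refine pow_le_one₀ (by positivity) ?_
      rw [div_le_one (by positivity)]
      exact_mod_cast Nat.factorial_le (Nat.le_add_right s m)
    rw [norm_mul, norm_pow, Complex.norm_real, Real.norm_of_nonneg (by positivity)]
    calc _ ≤ 1 * (poch (θ * R ^ 2 + c) s / R ^ (2 * s) / poch b s) * ‖ξ‖ ^ (s + m) := by
          rw [div_div, mul_comm (R ^ (2 * s))]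
          gcongr
      _ ≤ 1 * (poch (θ * L ^ 2 + c) s / L ^ (2 * s) / poch b s) * ‖ξ‖ ^ (s + m) := by
          gcongr 1 * (?_ / _) * _
          exact poch_div_le hθ hc hL hLR s
      _ = _ := by
          rw [div_pow, ← pow_mul, pow_add]
          ring

/-- One term of the singular part, without its `R`-independent factors. -/
lemma tendsto_gamma {θ : ℝ} (hθ : 0 < θ) (β : ℝ) (m k : ℕ) :
    Tendsto (fun R : ℝ => R ^ (2 * (m + k + 1)) *
      (Real.Gamma (θ * R ^ 2 + β + 1 - m - k) / Real.Gamma (θ * R ^ 2 + β + 2))) atTop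
      (nhds ((θ ^ (m + k + 1))⁻¹)) := by
  refine ((tendsto_poch_div θ (β + 1 - m - k) (m + k + 1)).inv₀ (by positivity)).congr' ?_
  have hlim : Tendsto (fun R : ℝ => θ * R ^ 2 + (β + 1 - m - k)) atTop atTop :=
    tendsto_atTop_add_const_right _ _ ((tendsto_pow_atTop two_ne_zero).const_mul_atTop hθ)
  filter_upwards [hlim.eventually_gt_atTop 0] with R hx
  have e : θ * R ^ 2 + β + 2 = θ * R ^ 2 + (β + 1 - m - k) + ((m + k + 1 : ℕ) : ℝ) := by
    push_cast
    ring
  have e' : θ * R ^ 2 + β + 1 - m - k = θ * R ^ 2 + (β + 1 - m - k) := by ring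
  rw [e, e', Gamma_add_nat hx]
  have := Real.Gamma_pos_of_pos hx
  have := poch_pos hx (m + k + 1)
  field_simp

lemma tendsto_singular {θ : ℝ} (hθ : 0 < θ) (β : ℝ) (m N : ℕ) (ξ : ℂ) :
    Tendsto (fun R : ℝ => ((R : ℂ) ^ (2 * m)) * ∑ k ∈ Finset.range N,
        ((Real.Gamma (θ * R ^ 2 + β + 1 - (m : ℝ) - (k : ℝ)) * Real.Gamma (β + 1) /
            (Real.Gamma (β - (m : ℝ) - (k : ℝ)) * Real.Gamma (θ * R ^ 2 + β + 2)) *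
          ((k.factorial : ℝ) / ((m + k).factorial : ℝ)) ^ 2 : ℝ) : ℂ) *
          (((R : ℂ) ^ 2) / ξ) ^ (k + 1)) atTop
      (nhds (((((θ : ℝ) ^ m)⁻¹ : ℝ) : ℂ) * ∑ k ∈ Finset.range N,
        ((((k.factorial : ℝ) / ((m + k).factorial : ℝ)) ^ 2 *
          (Real.Gamma (β + 1) / Real.Gamma (β - (m : ℝ) - (k : ℝ))) : ℝ) : ℂ) *
          ((θ : ℂ) * ξ) ^ (-((k : ℤ) + 1)))) := by
  simp_rw [Finset.mul_sum]
  refine tendsto_finsetSum _ fun k _ => ?_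
  have h := ((Complex.continuous_ofReal.tendsto _).comp (tendsto_gamma hθ β m k)).mul_const
    (((((k.factorial : ℝ) / ((m + k).factorial : ℝ)) ^ 2 *
      (Real.Gamma (β + 1) / Real.Gamma (β - (m : ℝ) - (k : ℝ))) : ℝ) : ℂ) * (ξ ^ (k + 1))⁻¹)
  convert h using 2 with R
  · simp only [Function.comp, Complex.ofReal_div, Complex.ofReal_pow, Complex.ofReal_mul, div_pow,
      ← pow_mul, add_assoc m k 1, mul_add 2 m, pow_add (R : ℂ) (2 * m)]
    ring
  · have hz : ((θ : ℂ) * ξ) ^ (-((k : ℤ) + 1)) = (((θ : ℂ) * ξ) ^ (k + 1))⁻¹ := by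
      rw [zpow_neg]
      norm_cast
    rw [hz, mul_pow, mul_inv, add_assoc m k 1, pow_add θ m (k + 1), mul_inv]
    push_cast
    ring

theorem stmt8 (θ β₀ : ℝ) (p : ℕ) (hθ : 0 < θ)
    (hβ₀ : -1 < β₀ ∧ β₀ ≤ 0) (β : ℝ) (hβ : β = β₀ + p) (m : ℕ)
    (ξ : ℂ) (hξ : ξ ≠ 0) :
    Filter.Tendsto (fun R : ℝ => Kker m p R (θ * R ^ 2) β ξ) Filter.atTop
      (nhds (Lker m p θ β ξ)) := by
  have hβ1 : 0 < β + 1 := by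
    have : (0 : ℝ) ≤ p := p.cast_nonneg
    linarith [hβ₀.1]
  unfold Kker Lker
  refine Tendsto.add (Tendsto.add ?_ ?_) ?_
  · simp_rw [add_assoc (θ * _ ^ 2) β 2]
    exact tendsto_regular θ (β + 2) (β + 1) m ξ
  · simp_rw [add_assoc (θ * _ ^ 2) β 2]
    exact tendsto_series hθ (by linarith) hβ1 m hξ
  · split_ifs
    · exact tendsto_const_nhds
    · exact tendsto_singular hθ β m (p - m) ξ
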